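/- Let α > 1, let V be a reflexive real Banach space such that both V and V* are uniformly convex, let A : V → Set V* be a maximal-monotone multivalued operator, and fix λ > 0. Define the generalized Yosida approximation A_λ(x) := λ^{-1} j(x − x_λ), where x_λ is the unique solution of the resolvent equation 0 ∈ J(x_λ − x) + λ A(x_λ). Then A_λ : V → V* is demicontinuous: if u_n → u strongly in V, then A_λ(u_n) → A_λ(u) in the weak topology of V*. -/

import Mathlib

open NormedSpace Filter Topology

/-- The generalized duality mapping with exponent `α` on a real normed space `V`:
`J(u) = {v ∈ V* | ⟨v,u⟩ = ‖u‖^α = ‖v‖^{α/(α-1)}}`. -/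
def genJ (α : ℝ) (V : Type*) [NormedAddCommGroup V] [NormedSpace ℝ V] (u : V) :
    Set (StrongDual ℝ V) :=
  {v : StrongDual ℝ V | v u = ‖u‖ ^ α ∧ ‖v‖ ^ (α / (α - 1)) = ‖u‖ ^ α}

/-- A multivalued operator `A : V → Set V*` is monotone if
`⟨v₁ - v₂, u₁ - u₂⟩ ≥ 0` for all `v₁ ∈ A u₁`, `v₂ ∈ A u₂`. -/
def MonotoneOp {V : Type*} [NormedAddCommGroup V] [NormedSpace ℝ V]
    (A : V → Set (StrongDual ℝ V)) : Prop :=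
  ∀ u₁ u₂ : V, ∀ v₁ ∈ A u₁, ∀ v₂ ∈ A u₂, 0 ≤ (v₁ - v₂) (u₁ - u₂)

/-- A monotone multivalued operator is maximal monotone if its graph is not properly
contained in the graph of any other monotone operator. -/
def MaximalMonotoneOp {V : Type*} [NormedAddCommGroup V] [NormedSpace ℝ V]
    (A : V → Set (StrongDual ℝ V)) : Prop :=
  MonotoneOp A ∧
    ∀ B : V → Set (StrongDual ℝ V), MonotoneOp B → (∀ u, A u ⊆ B u) → ∀ u, B u = A u

/-!
The starting point is a quantitative form of the monotonicity of the duality mapping: if `v ∈ J(u)`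
and `v₀ ∈ J(u₀)`, then `⟨v - v₀, u - u₀⟩` is at least
`(‖v‖ - ‖v₀‖) (‖u‖ - ‖u₀‖) + (‖v‖ + ‖v₀‖ - ‖v + v₀‖) ‖u₀‖`, and both terms are nonnegative.
For `u = y - y_λ` and `u₀ = x - x_λ`, the monotonicity of `A` bounds the pairing from above by
`⟨v - v₀, y - x⟩ ≤ ‖v - v₀‖ ‖y - x‖`. As `y → x` the first term forces `‖v‖ → ‖v₀‖`, then the
second one forces `‖v + v₀‖ → 2 ‖v₀‖`, and uniform convexity of `V*` turns this into `v → v₀` in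
norm.
-/

section MetricSpace

variable {ι X Y : Type*} [PseudoMetricSpace X] [PseudoMetricSpace Y] {l : Filter ι}

-- If `g (x i)` stays away from `g a`, then by continuity `x i` stays away from `a`, and dividing
-- the inequality by `dist (g (x i)) (g a)` bounds `dist (x i) a` by a constant multiple of `e i`.
lemma tendsto_comp_of_dist_mul_dist_le {g : X → Y} {x : ι → X} {a : X} {e : ι → ℝ} {C : ℝ}
    (hg : ContinuousAt g a) (he : Tendsto e l (𝓝 0))
    (h : ∀ i, dist (x i) a * dist (g (x i)) (g a) ≤ (dist (g (x i)) (g a) + C) * e i) :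
    Tendsto (fun i => g (x i)) l (𝓝 (g a)) := by
  rw [Metric.tendsto_nhds]
  intro ε hε
  obtain ⟨δ, hδ, hgδ⟩ := Metric.continuousAt_iff.mp hg ε hε
  have e_lt : ∀ᶠ i in l, e i < δ := he.eventually_lt_const hδ
  have C_mul_e_lt : ∀ᶠ i in l, C * e i < ε * (δ - e i) := by
    refine (he.const_mul C).eventually_lt ((he.const_sub δ).const_mul ε) ?_
    rw [mul_zero, sub_zero]
    exact mul_pos hε hδ
  filter_upwards [e_lt, C_mul_e_lt] with i hei hCi
  by_contra! far
  have x_far : δ ≤ dist (x i) a := le_of_not_gt fun near => (hgδ near).not_ge far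
  have lower : ε * (δ - e i) ≤ dist (g (x i)) (g a) * (dist (x i) a - e i) := by gcongr
  linarith [h i]

end MetricSpace

section UniformConvex

variable {ι E : Type*} [NormedAddCommGroup E] [NormedSpace ℝ E] [UniformConvexSpace E]
  {l : Filter ι} {v : ι → E} {v₀ : E}

lemma tendsto_of_norm_le_of_tendsto_norm_add (hv : ∀ i, ‖v i‖ ≤ ‖v₀‖)
    (hadd : Tendsto (fun i => ‖v i + v₀‖) l (𝓝 (2 * ‖v₀‖))) : Tendsto v l (𝓝 v₀) := by
  rw [Metric.tendsto_nhds]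
  intro ε hε
  obtain ⟨δ, hδ, hconvex⟩ := exists_forall_closed_ball_dist_add_le_two_mul_sub E hε ‖v₀‖
  filter_upwards [hadd.eventually_const_lt (sub_lt_self _ hδ)] with i hi
  rw [dist_eq_norm]
  by_contra! far
  exact hi.not_ge (hconvex (hv i) le_rfl far)

-- The bound on the norms is arranged by rescaling `v i` by `‖v₀‖ / ‖v i‖`, which tends to `1`.
lemma tendsto_of_tendsto_norm_of_tendsto_norm_add (hnorm : Tendsto (fun i => ‖v i‖) l (𝓝 ‖v₀‖))
    (hadd : Tendsto (fun i => ‖v i + v₀‖) l (𝓝 (2 * ‖v₀‖))) : Tendsto v l (𝓝 v₀) := by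
  rcases eq_or_ne v₀ 0 with rfl | hv₀
  · rw [norm_zero] at hnorm
    exact tendsto_zero_iff_norm_tendsto_zero.mpr hnorm
  have norm_v₀_ne : ‖v₀‖ ≠ 0 := norm_ne_zero_iff.mpr hv₀
  set y : ι → E := fun i => (‖v₀‖ / ‖v i‖) • v i with hy
  have norm_y_le (i) : ‖y i‖ ≤ ‖v₀‖ := by
    rw [hy, norm_smul, norm_div, norm_norm, norm_norm, div_mul_comm]
    exact mul_le_of_le_one_left (norm_nonneg v₀) (div_self_le_one _)
  have factor : Tendsto (fun i => 1 - ‖v₀‖ / ‖v i‖) l (𝓝 0) := by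
    have ratio : Tendsto (fun i => ‖v₀‖ / ‖v i‖) l (𝓝 (‖v₀‖ / ‖v₀‖)) :=
      tendsto_const_nhds.div hnorm norm_v₀_ne
    simpa only [div_self norm_v₀_ne, sub_self] using ratio.const_sub 1
  have norm_sub_y : Tendsto (fun i => ‖v i - y i‖) l (𝓝 0) := by
    simpa only [hy, ← norm_smul, sub_smul, one_smul, norm_zero, zero_mul] using
      factor.norm.mul hnorm
  have norm_y_add : Tendsto (fun i => ‖y i + v₀‖) l (𝓝 (2 * ‖v₀‖)) := by
    refine hadd.congr_dist (squeeze_zero (fun _ => dist_nonneg) (fun i => ?_) norm_sub_y)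
    simpa only [add_sub_add_right_eq_sub] using dist_norm_norm_le (v i + v₀) (y i + v₀)
  simpa only [add_sub_cancel, add_zero] using
    (tendsto_of_norm_le_of_tendsto_norm_add norm_y_le norm_y_add).add
      (tendsto_zero_iff_norm_tendsto_zero.mpr norm_sub_y)

end UniformConvex

section Alignment

variable {V : Type*} [NormedAddCommGroup V] [NormedSpace ℝ V]

/-- `v ∈ V*` and `u ∈ V` are aligned when `u` attains the norm of `v`, that is, when the pairing
inequality `v u ≤ ‖v‖ * ‖u‖` is an equality. -/
def Aligned (v : StrongDual ℝ V) (u : V) : Prop := v u = ‖v‖ * ‖u‖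

lemma Aligned.le_sub_apply_sub {v v₀ : StrongDual ℝ V} {u u₀ : V} (h : Aligned v u)
    (h₀ : Aligned v₀ u₀) :
    (‖v‖ - ‖v₀‖) * (‖u‖ - ‖u₀‖) + (‖v‖ + ‖v₀‖ - ‖v + v₀‖) * ‖u₀‖ ≤ (v - v₀) (u - u₀) := by
  have sum_le : (v + v₀) u₀ ≤ ‖v + v₀‖ * ‖u₀‖ := (Real.le_norm_self _).trans ((v + v₀).le_opNorm u₀)
  have cross_le : v₀ u ≤ ‖v₀‖ * ‖u‖ := (Real.le_norm_self _).trans (v₀.le_opNorm u)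
  simp only [Aligned, add_apply, sub_apply, map_sub] at *
  linarith

end Alignment

section DualityMapping

variable {α : ℝ} {V : Type*} [NormedAddCommGroup V] [NormedSpace ℝ V] {u u₀ : V}
  {v v₀ : StrongDual ℝ V}

lemma neg_mem_genJ_neg (hv : v ∈ genJ α V u) : -v ∈ genJ α V (-u) := by
  simpa [genJ] using hv

lemma norm_eq_of_mem_genJ (hα : 1 < α) (hv : v ∈ genJ α V u) : ‖v‖ = ‖u‖ ^ (α - 1) := by
  have hα₀ : α ≠ 0 := by linarith
  have hα₁ : α - 1 ≠ 0 := by linarith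
  calc ‖v‖ = (‖v‖ ^ (α / (α - 1))) ^ (α / (α - 1))⁻¹ :=
        (Real.rpow_rpow_inv (norm_nonneg v) (div_ne_zero hα₀ hα₁)).symm
    _ = (‖u‖ ^ α) ^ ((α - 1) / α) := by rw [hv.2, inv_div]
    _ = ‖u‖ ^ (α - 1) := by rw [← Real.rpow_mul (norm_nonneg u), mul_div_cancel₀ _ hα₀]

lemma aligned_of_mem_genJ (hα : 1 < α) (hv : v ∈ genJ α V u) : Aligned v u := by
  rw [Aligned, norm_eq_of_mem_genJ hα hv, ← Real.rpow_add_one' (norm_nonneg u) (by linarith),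
    sub_add_cancel]
  exact hv.1

lemma norm_sub_mul_norm_sub_nonneg_of_mem_genJ (hα : 1 < α) (hv : v ∈ genJ α V u)
    (hv₀ : v₀ ∈ genJ α V u₀) : 0 ≤ (‖v‖ - ‖v₀‖) * (‖u‖ - ‖u₀‖) := by
  have hα₁ : 0 ≤ α - 1 := by linarith
  rw [norm_eq_of_mem_genJ hα hv, norm_eq_of_mem_genJ hα hv₀]
  rcases le_total ‖u‖ ‖u₀‖ with h | h
  · exact mul_nonneg_of_nonpos_of_nonpos
      (sub_nonpos.mpr (Real.rpow_le_rpow (norm_nonneg u) h hα₁)) (sub_nonpos.mpr h)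
  · exact mul_nonneg
      (sub_nonneg.mpr (Real.rpow_le_rpow (norm_nonneg u₀) h hα₁)) (sub_nonneg.mpr h)

lemma eq_zero_of_mem_genJ_zero (hα : 1 < α) (hv : v ∈ genJ α V 0) : v = 0 := by
  rw [← norm_eq_zero, norm_eq_of_mem_genJ hα hv, norm_zero, Real.zero_rpow (by linarith)]

lemma genJ_subsingleton [StrictConvexSpace ℝ (StrongDual ℝ V)] (hα : 1 < α) (u : V) :
    (genJ α V u).Subsingleton := by
  intro v hv v₀ hv₀
  rcases eq_or_ne u 0 with rfl | hu
  · rw [eq_zero_of_mem_genJ_zero hα hv, eq_zero_of_mem_genJ_zero hα hv₀]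
  have gap := (aligned_of_mem_genJ hα hv).le_sub_apply_sub (aligned_of_mem_genJ hα hv₀)
  rw [sub_self, sub_self, mul_zero, map_zero, zero_add] at gap
  have norm_add : ‖v‖ + ‖v₀‖ ≤ ‖v + v₀‖ :=
    sub_nonpos.mp (nonpos_of_mul_nonpos_left gap (norm_pos_iff.mpr hu))
  have norm_eq : ‖v‖ = ‖v₀‖ := by rw [norm_eq_of_mem_genJ hα hv, norm_eq_of_mem_genJ hα hv₀]
  exact eq_of_norm_eq_of_norm_add_eq norm_eq ((norm_add_le v v₀).antisymm norm_add)

section Convergence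

variable {ι : Type*} {l : Filter ι} {w h : ι → V} {w₀ : V} {f : ι → StrongDual ℝ V}
  {f₀ : StrongDual ℝ V}

lemma tendsto_norm_of_mem_genJ (hα : 1 < α) (hf : ∀ i, f i ∈ genJ α V (w i))
    (hf₀ : f₀ ∈ genJ α V w₀) (hh : Tendsto h l (𝓝 0))
    (hpair : ∀ i, (f i - f₀) (w i - w₀) ≤ ‖f i - f₀‖ * ‖h i‖) :
    Tendsto (fun i => ‖f i‖) l (𝓝 ‖f₀‖) := by
  have bound (i) : dist ‖w i‖ ‖w₀‖ * dist ‖f i‖ ‖f₀‖ ≤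
      (dist ‖f i‖ ‖f₀‖ + 2 * ‖f₀‖) * ‖h i‖ := by
    have defect_nonneg : 0 ≤ (‖f i‖ + ‖f₀‖ - ‖f i + f₀‖) * ‖w₀‖ :=
      mul_nonneg (sub_nonneg.mpr (norm_add_le _ _)) (norm_nonneg _)
    have norm_sub_bound : ‖f i - f₀‖ ≤ dist ‖f i‖ ‖f₀‖ + 2 * ‖f₀‖ := by
      linarith [norm_sub_le (f i) f₀, le_abs_self (‖f i‖ - ‖f₀‖), Real.dist_eq ‖f i‖ ‖f₀‖]
    calc dist ‖w i‖ ‖w₀‖ * dist ‖f i‖ ‖f₀‖ = (‖f i‖ - ‖f₀‖) * (‖w i‖ - ‖w₀‖) := by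
          rw [Real.dist_eq, Real.dist_eq, mul_comm, ← abs_mul,
            abs_of_nonneg (norm_sub_mul_norm_sub_nonneg_of_mem_genJ hα (hf i) hf₀)]
      _ ≤ (f i - f₀) (w i - w₀) := by
          linarith [(aligned_of_mem_genJ hα (hf i)).le_sub_apply_sub (aligned_of_mem_genJ hα hf₀)]
      _ ≤ ‖f i - f₀‖ * ‖h i‖ := hpair i
      _ ≤ (dist ‖f i‖ ‖f₀‖ + 2 * ‖f₀‖) * ‖h i‖ := by gcongr
  have rpow_continuousAt : ContinuousAt (fun t : ℝ => t ^ (α - 1)) ‖w₀‖ :=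
    Real.continuousAt_rpow_const _ _ (Or.inr (sub_nonneg.mpr hα.le))
  simp only [norm_eq_of_mem_genJ hα (hf _), norm_eq_of_mem_genJ hα hf₀] at bound ⊢
  exact tendsto_comp_of_dist_mul_dist_le rpow_continuousAt
    (tendsto_zero_iff_norm_tendsto_zero.mp hh) bound

lemma tendsto_of_mem_genJ [UniformConvexSpace (StrongDual ℝ V)] (hα : 1 < α)
    (hf : ∀ i, f i ∈ genJ α V (w i)) (hf₀ : f₀ ∈ genJ α V w₀) (hh : Tendsto h l (𝓝 0))
    (hpair : ∀ i, (f i - f₀) (w i - w₀) ≤ ‖f i - f₀‖ * ‖h i‖) :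
    Tendsto f l (𝓝 f₀) := by
  have hnorm := tendsto_norm_of_mem_genJ hα hf hf₀ hh hpair
  rcases eq_or_ne w₀ 0 with rfl | hw₀
  · obtain rfl := eq_zero_of_mem_genJ_zero hα hf₀
    rw [norm_zero] at hnorm
    exact tendsto_zero_iff_norm_tendsto_zero.mpr hnorm
  refine tendsto_of_tendsto_norm_of_tendsto_norm_add hnorm ?_
  have norm_w₀_pos : 0 < ‖w₀‖ := norm_pos_iff.mpr hw₀
  have defect_le (i) : ‖f i‖ + ‖f₀‖ - ‖f i + f₀‖ ≤ (‖f i‖ + ‖f₀‖) * ‖h i‖ / ‖w₀‖ := by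
    rw [le_div_iff₀ norm_w₀_pos]
    calc (‖f i‖ + ‖f₀‖ - ‖f i + f₀‖) * ‖w₀‖ ≤ (f i - f₀) (w i - w₀) := by
          linarith [(aligned_of_mem_genJ hα (hf i)).le_sub_apply_sub (aligned_of_mem_genJ hα hf₀),
            norm_sub_mul_norm_sub_nonneg_of_mem_genJ hα (hf i) hf₀]
      _ ≤ ‖f i - f₀‖ * ‖h i‖ := hpair i
      _ ≤ (‖f i‖ + ‖f₀‖) * ‖h i‖ := by gcongr; exact norm_sub_le _ _
  have hsum : Tendsto (fun i => ‖f i‖ + ‖f₀‖) l (𝓝 (2 * ‖f₀‖)) := by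
    simpa only [two_mul] using hnorm.add_const ‖f₀‖
  have defect_bound : Tendsto (fun i => (‖f i‖ + ‖f₀‖) * ‖h i‖ / ‖w₀‖) l (𝓝 0) := by
    simpa only [norm_zero, mul_zero, zero_div] using (hsum.mul hh.norm).div_const ‖w₀‖
  have defect : Tendsto (fun i => ‖f i‖ + ‖f₀‖ - ‖f i + f₀‖) l (𝓝 0) :=
    squeeze_zero (fun i => sub_nonneg.mpr (norm_add_le _ _)) defect_le defect_bound
  simpa only [sub_sub_cancel, sub_zero] using hsum.sub defect

end Convergence

end DualityMapping

lemma MonotoneOp.sub_apply_sub_nonneg_of_smul_mem {V : Type*} [NormedAddCommGroup V]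
    [NormedSpace ℝ V] {A : V → Set (StrongDual ℝ V)} (hA : MonotoneOp A) {c : ℝ} (hc : 0 < c)
    {u u₀ : V} {v v₀ : StrongDual ℝ V} (hv : c • v ∈ A u) (hv₀ : c • v₀ ∈ A u₀) :
    0 ≤ (v - v₀) (u - u₀) := by
  have scaled := hA u u₀ _ hv _ hv₀
  simp only [sub_apply, smul_apply, smul_eq_mul, ← mul_sub] at scaled
  exact nonneg_of_mul_nonneg_right scaled hc

theorem statement15_general {α : ℝ} (hα : 1 < α) {V : Type*} [NormedAddCommGroup V]
    [NormedSpace ℝ V] [UniformConvexSpace (StrongDual ℝ V)]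
    {j : V → StrongDual ℝ V} (hj : ∀ u : V, j u ∈ genJ α V u)
    {A : V → Set (StrongDual ℝ V)} (hA : MonotoneOp A)
    {lam : ℝ} (hlam : 0 < lam)
    {R : V → V} (hR : ∀ x : V, (-lam⁻¹) • j (R x - x) ∈ A (R x)) :
    Continuous fun x => lam⁻¹ • j (x - R x) := by
  have j_resolvent (x : V) : j (R x - x) = -j (x - R x) := by
    rw [← neg_sub x]
    exact genJ_subsingleton hα _ (hj _) (neg_mem_genJ_neg (hj _))
  have yosida_mem (x : V) : lam⁻¹ • j (x - R x) ∈ A (R x) := by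
    simpa only [j_resolvent, neg_smul_neg] using hR x
  have pairing_le (y x : V) : (j (y - R y) - j (x - R x)) ((y - R y) - (x - R x)) ≤
      ‖j (y - R y) - j (x - R x)‖ * ‖y - x‖ := by
    have resolvent_monotone : 0 ≤ (j (y - R y) - j (x - R x)) (R y - R x) :=
      hA.sub_apply_sub_nonneg_of_smul_mem (inv_pos.mpr hlam) (yosida_mem y) (yosida_mem x)
    rw [sub_sub_sub_comm, map_sub]
    exact (sub_le_self _ resolvent_monotone).trans
      ((Real.le_norm_self _).trans (ContinuousLinearMap.le_opNorm _ _))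
  refine Continuous.const_smul (continuous_iff_continuousAt.mpr fun x => ?_) lam⁻¹
  have sub_tendsto : Tendsto (fun y => y - x) (𝓝 x) (𝓝 0) :=
    tendsto_sub_nhds_zero_iff.mpr tendsto_id
  exact tendsto_of_mem_genJ hα (fun y => hj (y - R y)) (hj (x - R x)) sub_tendsto
    fun y => pairing_le y x

/-- the generalized Yosida approximation `A_λ(x) = λ⁻¹ j(x - R x)`
of a maximal monotone operator on a reflexive Banach space with uniformly convex
space and dual is demicontinuous: strong convergence in `V` implies weak
convergence of the approximations in `V*`. -/
theorem statement15 (α : ℝ) (hα : 1 < α) (V : Type*) [NormedAddCommGroup V]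
    [NormedSpace ℝ V] [CompleteSpace V] [UniformConvexSpace V]
    [UniformConvexSpace (StrongDual ℝ V)]
    (hrefl : Function.Surjective (inclusionInDoubleDual ℝ V))
    (j : V → StrongDual ℝ V) (hj : ∀ u : V, j u ∈ genJ α V u)
    (A : V → Set (StrongDual ℝ V)) (hA : MaximalMonotoneOp A)
    (lam : ℝ) (hlam : 0 < lam)
    (R : V → V) (hR : ∀ x : V, (-lam⁻¹) • j (R x - x) ∈ A (R x))
    (u : ℕ → V) (x : V)
    (hconv : Tendsto (fun n => ‖u n - x‖) atTop (𝓝 0)) :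
    ∀ φ : StrongDual ℝ (StrongDual ℝ V),
      Tendsto (fun n => φ (lam⁻¹ • j (u n - R (u n)))) atTop
        (𝓝 (φ (lam⁻¹ • j (x - R x)))) := by
  exact fun φ => ((φ.continuous.comp (statement15_general hα hj hA.1 hlam hR)).tendsto x).comp
    (tendsto_iff_norm_sub_tendsto_zero.mpr hconv)
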